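/- Let n be a natural number, V a set, h : Fin n → V a function, and let E be any set of ordered pairs (i,j), i ≠ j, each of which is a consecutive collision pair for h. Then the simple graph G on Fin n whose edges are the unordered pairs {i,j} for (i,j) ∈ E satisfies: every vertex has at most one neighbor smaller than itself and at most one neighbor larger than itself (hence maximum degree at most 2), and G contains no cycle. Consequently, every connected component of G is a path. -/

import Mathlib

open Set

/-- `(i, j)` is a consecutive collision pair for `h`: `i ≠ j`, `h i = h j`, and
no index strictly between `i` and `j` has the same hash value. -/
def ConsecPair {n : ℕ} {V : Type*} (h : Fin n → V) (i j : Fin n) : Prop :=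
  i ≠ j ∧ h i = h j ∧ ∀ a : Fin n, min i j < a → a < max i j → h a ≠ h i

/-!
Two neighbours of `v` on the same side share the value `h v`, so if they were distinct, the one
nearer to `v` would separate the farther one from `v`. Hence `v` has at most one neighbour on each
side. On a cycle, however, the largest vertex would have two distinct smaller neighbours.
-/

theorem fromRel_le_iff {α : Type*} {r : α → α → Prop} {G : SimpleGraph α} :
    SimpleGraph.fromRel r ≤ G ↔ ∀ i j, i ≠ j → r i j → G.Adj i j :=
  ⟨fun hle _ _ hne hr => hle ⟨hne, Or.inl hr⟩,
    fun hr i j ⟨hne, hij⟩ => hij.elim (hr i j hne) fun hji => (hr j i hne.symm hji).symm⟩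

section OrderedGraph

variable {ι : Type*} [LinearOrder ι] {G : SimpleGraph ι}

theorem encard_neighborSet_le_two {v : ι} (hlower : (G.neighborSet v ∩ Iio v).encard ≤ 1)
    (hupper : (G.neighborSet v ∩ Ioi v).encard ≤ 1) : (G.neighborSet v).encard ≤ 2 := by
  have hsplit : G.neighborSet v = G.neighborSet v ∩ Iio v ∪ G.neighborSet v ∩ Ioi v := by
    rw [← inter_union_distrib_left, Iio_union_Ioi, left_eq_inter, subset_compl_singleton_iff]
    exact G.irrefl
  calc (G.neighborSet v).encard
      ≤ (G.neighborSet v ∩ Iio v).encard + (G.neighborSet v ∩ Ioi v).encard := by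
        conv_lhs => rw [hsplit]
        exact encard_union_le _ _
    _ ≤ 1 + 1 := add_le_add hlower hupper
    _ = 2 := one_add_one_eq_two

theorem isAcyclic_of_subsingleton_neighborSet_inter_Iio
    (hlower : ∀ v, (G.neighborSet v ∩ Iio v).Subsingleton) : G.IsAcyclic := by
  intro w c hc
  obtain ⟨m, hm, hmax⟩ :=
    exists_max_image {x | x ∈ c.support} id (List.finite_toSet _) ⟨w, c.start_mem_support⟩
  have hcycle := hc.rotate hm
  have hlt : ∀ {x}, G.Adj m x → x ∈ (c.rotate m hm).support → x < m := fun hadj hx =>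
    (hmax _ ((c.mem_support_rotate_iff _ hm).1 hx)).lt_of_ne hadj.ne'
  have hsnd := SimpleGraph.Walk.adj_snd hcycle.not_nil
  have hpen := (SimpleGraph.Walk.adj_penultimate hcycle.not_nil).symm
  exact hcycle.snd_ne_penultimate <| hlower m
    ⟨hsnd, hlt hsnd (SimpleGraph.Walk.getVert_mem_support _ _)⟩
    ⟨hpen, hlt hpen (SimpleGraph.Walk.getVert_mem_support _ _)⟩

end OrderedGraph

section ConsecCollision

variable {ι V : Type*} [LinearOrder ι]

/-- The graph joining all consecutive collision pairs of `h`. Adjacency is `ConsecPair` with an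
arbitrary linear order of indices in place of `Fin n`. -/
def consecCollisionGraph (h : ι → V) : SimpleGraph ι where
  Adj i j := i ≠ j ∧ h i = h j ∧ ∀ a, min i j < a → a < max i j → h a ≠ h i
  symm := ⟨fun i j ⟨hne, heq, hbetween⟩ =>
    ⟨hne.symm, heq.symm, by rwa [min_comm, max_comm, ← heq]⟩⟩
  loopless := ⟨fun _ hadj => hadj.1 rfl⟩

namespace consecCollisionGraph

variable {h : ι → V} {v a b : ι}

theorem le_of_adj_of_lt (ha : (consecCollisionGraph h).Adj v a) (hvb : v < b) (hb : h b = h v) :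
    a ≤ b :=
  le_of_not_gt fun hba => ha.2.2 b (min_lt_of_left_lt hvb) (lt_max_of_lt_right hba) hb

theorem le_of_adj_of_gt (ha : (consecCollisionGraph h).Adj v a) (hbv : b < v) (hb : h b = h v) :
    b ≤ a :=
  le_of_not_gt fun hab => ha.2.2 b (min_lt_of_right_lt hab) (lt_max_of_lt_left hbv) hb

theorem subsingleton_neighborSet_inter_Iio (h : ι → V) (v : ι) :
    ((consecCollisionGraph h).neighborSet v ∩ Iio v).Subsingleton :=
  fun _ ⟨ha, hav⟩ _ ⟨hb, hbv⟩ =>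
    le_antisymm (le_of_adj_of_gt hb hav ha.2.1.symm) (le_of_adj_of_gt ha hbv hb.2.1.symm)

theorem subsingleton_neighborSet_inter_Ioi (h : ι → V) (v : ι) :
    ((consecCollisionGraph h).neighborSet v ∩ Ioi v).Subsingleton :=
  fun _ ⟨ha, hva⟩ _ ⟨hb, hvb⟩ =>
    le_antisymm (le_of_adj_of_lt ha hvb hb.2.1.symm) (le_of_adj_of_lt hb hva ha.2.1.symm)

end consecCollisionGraph

end ConsecCollision

theorem stmt5_general {ι V : Type*} [LinearOrder ι] (h : ι → V) (G : SimpleGraph ι)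
    (hG : G ≤ consecCollisionGraph h) :
    (∀ v : ι, {u : ι | G.Adj v u ∧ u < v}.encard ≤ 1) ∧
    (∀ v : ι, {u : ι | G.Adj v u ∧ v < u}.encard ≤ 1) ∧
    (∀ v : ι, (G.neighborSet v).encard ≤ 2) ∧
    G.IsAcyclic := by
  have lower (v : ι) : (G.neighborSet v ∩ Iio v).Subsingleton :=
    (consecCollisionGraph.subsingleton_neighborSet_inter_Iio h v).anti
      (inter_subset_inter_left _ fun _ hadj => hG hadj)
  have upper (v : ι) : (G.neighborSet v ∩ Ioi v).Subsingleton :=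
    (consecCollisionGraph.subsingleton_neighborSet_inter_Ioi h v).anti
      (inter_subset_inter_left _ fun _ hadj => hG hadj)
  have lower_card (v : ι) := encard_le_one_iff_subsingleton.2 (lower v)
  have upper_card (v : ι) := encard_le_one_iff_subsingleton.2 (upper v)
  exact ⟨lower_card, upper_card,
    fun v => encard_neighborSet_le_two (lower_card v) (upper_card v),
    isAcyclic_of_subsingleton_neighborSet_inter_Iio lower⟩

theorem stmt5 {n : ℕ} {V : Type*} (h : Fin n → V) (E : Set (Fin n × Fin n))
    (hE : ∀ p ∈ E, ConsecPair h p.1 p.2)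
    (G : SimpleGraph (Fin n)) (hG : G = SimpleGraph.fromRel (fun i j => (i, j) ∈ E)) :
    (∀ v : Fin n, Set.ncard {u : Fin n | G.Adj v u ∧ u < v} ≤ 1) ∧
    (∀ v : Fin n, Set.ncard {u : Fin n | G.Adj v u ∧ v < u} ≤ 1) ∧
    (∀ v : Fin n, Set.ncard (G.neighborSet v) ≤ 2) ∧
    G.IsAcyclic := by
  obtain ⟨lower, upper, degree, acyclic⟩ := stmt5_general h G <|
    hG.trans_le (fromRel_le_iff.2 fun i j _ hij => hE (i, j) hij)
  exact ⟨fun v => ENat.toNat_le_of_le_natCast (lower v),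
    fun v => ENat.toNat_le_of_le_natCast (upper v),
    fun v => ENat.toNat_le_of_le_natCast (degree v), acyclic⟩
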